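/- arXiv:2101.12711 — 2 statements merged into one kernel-verified Lean document; each statement's English description precedes it below -/
import Mathlib

section
/- Let n ≥ 2 and let E ⊆ ℝⁿ be a Lebesgue measurable set with |E| < ∞ and H^{n−1}(∂*E) < ∞. Let p₀ ∈ ℝⁿ and R > 0 be such that H^{n−1}(∂*E ∩ B_R(p₀)) > 0. Then there exist ε₀ = ε₀(R,E) > 0 and C = C(R,E) > 0 such that for every ε ∈ (−ε₀, ε₀) there is a Lebesgue measurable set F ⊆ ℝⁿ with: the symmetric difference F Δ E compactly contained in B_R(p₀) (i.e. F ∖ K = E ∖ K for some compact K ⊂ B_R(p₀)); |F| = |E| + ε; and H^{n−1}(∂*F ∩ B_R(p₀)) ≤ H^{n−1}(∂*E ∩ B_R(p₀)) + C·|ε|. -/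
/-!
The set `E` is moved by maps `Φ_t(x) = x + t φ(x) v`, where `φ` is a `C¹` function with compact
support in the ball `B = B_R(p₀)` and `v` is a fixed vector.

* For small `t` the map `Φ_t` is a bi-Lipschitz bijection that is the identity off `tsupport φ`, so
  `F = Φ_t(E)` differs from `E` only in this compact set. Its derivative is a transvection with
  determinant `1 + t ∂ᵥφ`, so by change of variables `|Φ_t(E)| = |E| + t ∫_E ∂ᵥφ`: the volume is
  exactly affine in `t`, and `t = ε / ∫_E ∂ᵥφ` achieves the prescribed volume as soon as the
  integral is nonzero (`toReal_measure_shift_image`).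
* Bi-Lipschitz bijections with bounded Jacobian preserve points of density `0` and `1`, so the
  essential boundary of `Φ_t(E)` lies in the image of that of `E` (`essBoundary_image_subset`).
  As `Φ_t` is `(1 + M|t|)`-Lipschitz, `H^{n-1}` grows at most by the factor
  `(1 + M|t|)^{n-1} ≤ 1 + C|t|`. Neither Federer's theorem nor any structure theory for sets of
  finite perimeter is needed.
* If `∫_E ∂ᵥφ = 0` for all `φ` and `v`, the mollified indicators of `E` are locally constant and
  converge almost everywhere to the indicator, so `E` is null or of full measure in `B`
  (`null_or_null_of_forall_integral_eq_zero`). Then every point of `B` has density `0` or `1` and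
  the essential boundary does not meet `B`, contrary to the positivity of the relative perimeter.
-/

open MeasureTheory Metric Filter
open scoped ENNReal

/-- The set of points of density `t` of a set `E` in a metric measure space. -/
def densitySet {X : Type*} [MetricSpace X] [MeasurableSpace X]
    (μ : Measure X) (E : Set X) (t : ℝ≥0∞) : Set X :=
  {x : X | Tendsto (fun r : ℝ => μ (E ∩ ball x r) / μ (ball x r))
    (nhdsWithin 0 (Set.Ioi 0)) (nhds t)}

/-- The essential boundary of a set `E`: the complement of the union of the sets of
points of density `0` and of density `1`. -/
def essBoundary {X : Type*} [MetricSpace X] [MeasurableSpace X]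
    (μ : Measure X) (E : Set X) : Set X :=
  (densitySet μ E 0 ∪ densitySet μ E 1)ᶜ

section

set_option linter.unusedSectionVars false

open scoped Convolution Topology NNReal

variable {V : Type*} [NormedAddCommGroup V] [NormedSpace ℝ V] [FiniteDimensional ℝ V]
  [MeasurableSpace V] [BorelSpace V] {μ : Measure V} [μ.IsAddHaarMeasure]

/-! ### Densities -/

/-- The densities of `E` and of its complement add up to `1`. -/
lemma mem_densitySet_compl_iff {E : Set V} (hE : MeasurableSet E) (x : V) :
    x ∈ densitySet μ E 1 ↔ x ∈ densitySet μ Eᶜ 0 := by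
  have : ProperSpace V := FiniteDimensional.proper ℝ V
  have key : ∀ A : Set V, MeasurableSet A → ∀ r : ℝ, 0 < r →
      μ (A ∩ ball x r) / μ (ball x r) = 1 - μ (Aᶜ ∩ ball x r) / μ (ball x r) := by
    intro A hA r hr
    have h0 : μ (ball x r) ≠ 0 := (measure_ball_pos μ x hr).ne'
    have h1 : μ (ball x r) ≠ ⊤ := measure_ball_lt_top.ne
    have h2 : μ (Aᶜ ∩ ball x r) / μ (ball x r) ≠ ⊤ :=
      ENNReal.div_ne_top (measure_ne_top_of_subset Set.inter_subset_right h1) h0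
    refine ENNReal.eq_sub_of_add_eq h2 ?_
    rw [← ENNReal.add_div, Set.inter_comm A, Set.inter_comm Aᶜ, ← Set.sdiff_eq,
      measure_inter_add_sdiff _ hA, ENNReal.div_self h0 h1]
  have hsub : ∀ A : Set V, MeasurableSet A → ∀ a : ℝ≥0∞,
      x ∈ densitySet μ Aᶜ a → x ∈ densitySet μ A (1 - a) := by
    intro A hA a h
    have h' : Tendsto (fun r : ℝ => 1 - μ (Aᶜ ∩ ball x r) / μ (ball x r))
        (𝓝[>] 0) (𝓝 (1 - a)) :=
      ENNReal.Tendsto.sub tendsto_const_nhds h (Or.inl ENNReal.one_ne_top)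
    refine h'.congr' ?_
    filter_upwards [self_mem_nhdsWithin] with r hr
    exact (key A hA r hr).symm
  constructor
  · intro h
    have := hsub Eᶜ hE.compl 1 (by rwa [compl_compl])
    rwa [tsub_self] at this
  · intro h
    have := hsub E hE 0 h
    rwa [tsub_zero] at this

/-- A map that shrinks distances at most by the factor `2` and expands volumes at most by the
factor `2` preserves points of density zero, because `Φ E ∩ B_r(Φ x) ⊆ Φ (E ∩ B_{2r}(x))`. -/
lemma densitySet_zero_image {Φ : V → V} (hanti : AntilipschitzWith 2 Φ)
    (hmeas : ∀ S : Set V, MeasurableSet S → μ (Φ '' S) ≤ 2 * μ S)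
    {E : Set V} (hE : MeasurableSet E) {x : V} (hx : x ∈ densitySet μ E 0) :
    Φ x ∈ densitySet μ (Φ '' E) 0 := by
  have : ProperSpace V := FiniteDimensional.proper ℝ V
  set d := Module.finrank ℝ V
  have h2 : Tendsto (fun r : ℝ => 2 * r) (𝓝[>] 0) (𝓝[>] 0) := by
    refine tendsto_nhdsWithin_of_tendsto_nhds_of_eventually_within _ ?_ ?_
    · have : Tendsto (fun r : ℝ => 2 * r) (𝓝 0) (𝓝 (2 * 0)) := by
        exact (continuous_const.mul continuous_id).tendsto 0
      rw [mul_zero] at this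
      exact this.mono_left nhdsWithin_le_nhds
    · filter_upwards [self_mem_nhdsWithin] with r hr
      simpa using hr
  have hlim := (ENNReal.Tendsto.const_mul (a := 2 * ENNReal.ofReal (2 ^ d)) (Tendsto.comp hx h2)
    (Or.inr (ENNReal.mul_ne_top (by simp) ENNReal.ofReal_ne_top)))
  rw [mul_zero] at hlim
  refine tendsto_of_tendsto_of_tendsto_of_le_of_le' tendsto_const_nhds hlim
    (Eventually.of_forall fun _ => zero_le) ?_
  filter_upwards [self_mem_nhdsWithin] with r (hr : 0 < r)
  have hsub : Φ '' E ∩ ball (Φ x) r ⊆ Φ '' (E ∩ ball x (2 * r)) := by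
    rintro _ ⟨⟨y, hy, rfl⟩, hyr⟩
    refine ⟨y, ⟨hy, ?_⟩, rfl⟩
    have := hanti.le_mul_dist y x
    rw [mem_ball] at hyr ⊢
    simp only [NNReal.coe_ofNat] at this
    linarith
  have hball : μ (ball x (2 * r)) = ENNReal.ofReal (2 ^ d) * μ (ball (Φ x) r) := by
    rw [Measure.addHaar_ball_mul_of_pos μ x two_pos r, Measure.addHaar_ball_center μ (Φ x)]
  have h0 : ENNReal.ofReal (2 ^ d) ≠ 0 := by
    rw [Ne, ENNReal.ofReal_eq_zero, not_le]; positivity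
  calc μ (Φ '' E ∩ ball (Φ x) r) / μ (ball (Φ x) r)
      ≤ 2 * μ (E ∩ ball x (2 * r)) / μ (ball (Φ x) r) := by
        gcongr
        exact (measure_mono hsub).trans (hmeas _ (hE.inter measurableSet_ball))
    _ = 2 * ENNReal.ofReal (2 ^ d) * (μ (E ∩ ball x (2 * r)) / μ (ball x (2 * r))) := by
        rw [hball, mul_assoc, ← mul_div_assoc (ENNReal.ofReal _),
          ENNReal.mul_div_mul_left _ _ h0 ENNReal.ofReal_ne_top, mul_div_assoc]

lemma essBoundary_image_subset {Φ : V → V} (hbij : Function.Bijective Φ)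
    (hanti : AntilipschitzWith 2 Φ)
    (hmeas : ∀ S : Set V, MeasurableSet S → μ (Φ '' S) ≤ 2 * μ S)
    {E : Set V} (hE : MeasurableSet E) (hE' : MeasurableSet (Φ '' E)) :
    essBoundary μ (Φ '' E) ⊆ Φ '' essBoundary μ E := by
  intro y hy
  obtain ⟨x, rfl⟩ := hbij.2 y
  refine ⟨x, fun hx => hy ?_, rfl⟩
  rcases hx with hx | hx
  · exact Or.inl (densitySet_zero_image hanti hmeas hE hx)
  · rw [mem_densitySet_compl_iff hE] at hx
    refine Or.inr ((mem_densitySet_compl_iff hE' _).2 ?_)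
    rw [← Set.image_compl_eq hbij]
    exact densitySet_zero_image hanti hmeas hE.compl hx

lemma mem_densitySet_zero_of_null {E U : Set V} (hU : IsOpen U) (h : μ (E ∩ U) = 0) {x : V}
    (hx : x ∈ U) : x ∈ densitySet μ E 0 := by
  obtain ⟨r₀, hr₀, hsub⟩ := Metric.isOpen_iff.1 hU x hx
  refine Tendsto.congr' ?_ tendsto_const_nhds
  filter_upwards [Ioo_mem_nhdsGT hr₀] with r hr
  have : μ (E ∩ ball x r) = 0 :=
    measure_mono_null (Set.inter_subset_inter_right _ ((ball_subset_ball hr.2.le).trans hsub)) h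
  rw [this, ENNReal.zero_div]

/-! ### A set with vanishing distributional gradient -/

/-- If all the directional derivatives of test functions supported in a ball have vanishing integral
over `E`, then `E` is null or of full measure in that ball: mollifications of the indicator of `E`
are constant on slightly smaller balls, and they converge to the indicator almost everywhere. -/
lemma null_or_null_of_forall_integral_eq_zero {E : Set V} (hE : MeasurableSet E)
    (p : V) (R : ℝ)
    (h : ∀ φ : V → ℝ, ContDiff ℝ 1 φ → HasCompactSupport φ → tsupport φ ⊆ ball p R →
      ∀ v : V, ∫ x in E, fderiv ℝ φ x v ∂μ = 0) :
    μ (E ∩ ball p R) = 0 ∨ μ (Eᶜ ∩ ball p R) = 0 := by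
  by_contra! hne
  obtain ⟨h1, h0⟩ := hne
  have : ProperSpace V := FiniteDimensional.proper ℝ V
  let g : V → ℝ := E.indicator 1
  have hg : LocallyIntegrable g μ :=
    (locallyIntegrable_const (1 : ℝ)).indicator hE
  let ρ : ℕ → ContDiffBump (0 : V) := fun k =>
    ⟨1 / ((k : ℝ) + 1), 2 * (1 / ((k : ℝ) + 1)), by positivity,
      by have : 0 < 1 / ((k : ℝ) + 1) := by positivity
         linarith⟩
  have hρ : Tendsto (fun k => (ρ k).rOut) atTop (𝓝 0) := by
    have := (tendsto_one_div_add_atTop_nhds_zero_nat (𝕜 := ℝ)).const_mul 2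
    rwa [mul_zero] at this
  have hconv := ContDiffBump.ae_convolution_tendsto_right_of_locallyIntegrable (μ := μ) (φ := ρ)
    (l := atTop) (K := 2) hρ (Eventually.of_forall fun k => le_rfl) hg
  -- a point of convergence in each of the two parts of the ball
  obtain ⟨x₁, ⟨hx₁E, hx₁⟩, ht₁⟩ :=
    ((frequently_ae_mem_iff.2 h1).and_eventually hconv).exists
  obtain ⟨x₀, ⟨hx₀E, hx₀⟩, ht₀⟩ :=
    ((frequently_ae_mem_iff.2 h0).and_eventually hconv).exists
  have hg1 : g x₁ = 1 := by simp [g, hx₁E]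
  have hg0 : g x₀ = 0 := Set.indicator_of_notMem hx₀E _
  -- the mollifications agree at the two points
  have hev : ∀ᶠ k in atTop,
      ((ρ k).normed μ ⋆[ContinuousLinearMap.lsmul ℝ ℝ, μ] g) x₁ =
      ((ρ k).normed μ ⋆[ContinuousLinearMap.lsmul ℝ ℝ, μ] g) x₀ := by
    rw [mem_ball] at hx₀ hx₁
    have hpos : 0 < R - max (dist x₀ p) (dist x₁ p) := sub_pos.2 (max_lt hx₀ hx₁)
    filter_upwards [hρ.eventually (gt_mem_nhds hpos)] with k hk
    set f := (ρ k).normed μ with hf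
    have hfc : HasCompactSupport f := (ρ k).hasCompactSupport_normed
    have hfs : ContDiff ℝ 1 f := (ρ k).contDiff_normed (n := 1)
    have hder := fun x => hfc.hasFDerivAt_convolution_left
      (ContinuousLinearMap.lsmul ℝ ℝ) hfs hg x (𝕜 := ℝ)
    have hzero : ∀ x ∈ ball p (R - (ρ k).rOut),
        ((fderiv ℝ f) ⋆[(ContinuousLinearMap.lsmul ℝ ℝ).precompL V, μ] g) x = 0 := by
      intro x hx
      have hex : ConvolutionExistsAt (fderiv ℝ f) g x
          ((ContinuousLinearMap.lsmul ℝ ℝ).precompL V) μ :=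
        (hfc.fderiv ℝ).convolutionExists_left _ (hfs.continuous_fderiv one_ne_zero) hg x
      ext v
      rw [convolution_eq_swap, ContinuousLinearMap.integral_apply hex.integrable_swap]
      -- the derivative of the convolution at `x` tests `E` against the reflected bump
      let φ : V → ℝ := fun s => f (x - s)
      have hφd : ∀ s, fderiv ℝ φ s v = - fderiv ℝ f (x - s) v := by
        intro s
        have h1 : HasFDerivAt f (fderiv ℝ f (x - s)) (x - s) :=
          (hfs.differentiable one_ne_zero _).hasFDerivAt
        have h2 : HasFDerivAt (fun s => x - s) (-ContinuousLinearMap.id ℝ V) s :=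
          (hasFDerivAt_id s).const_sub x
        have := (h1.comp s h2).fderiv
        change fderiv ℝ (f ∘ fun s => x - s) s v = _
        rw [this]; simp
      have hφt : tsupport φ ⊆ closedBall x (ρ k).rOut := by
        refine closure_minimal (fun s hs => ?_) isClosed_closedBall
        have : x - s ∈ Function.support f := hs
        rw [hf, ContDiffBump.support_normed_eq, mem_ball_zero_iff] at this
        rw [mem_closedBall, dist_comm, dist_eq_norm]
        exact this.le
      have := h φ (hfs.comp (contDiff_const.sub contDiff_id))
        (HasCompactSupport.of_support_subset_isCompact (isCompact_closedBall x (ρ k).rOut)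
          (subset_closure.trans hφt))
        (hφt.trans (closedBall_subset_ball' (by rw [mem_ball] at hx; linarith))) v
      simp_rw [hφd] at this
      rw [integral_neg, neg_eq_zero, ← integral_indicator hE] at this
      rw [zero_apply, ← this]
      congr 1
      ext s
      by_cases hs : s ∈ E <;> simp [g, hs, ContinuousLinearMap.precompL_apply]
    have hopen : IsOpen (ball p (R - (ρ k).rOut)) := isOpen_ball
    refine (convex_ball p (R - (ρ k).rOut)).is_const_of_fderivWithin_eq_zero (𝕜 := ℝ)
      (fun x _ => (hder x).differentiableAt.differentiableWithinAt)
      (fun x hx => ?_) ?_ ?_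
    · rw [fderivWithin_of_isOpen hopen hx, (hder x).fderiv, hzero x hx]
    · rw [mem_ball]; linarith [le_max_right (dist x₀ p) (dist x₁ p)]
    · rw [mem_ball]; linarith [le_max_left (dist x₀ p) (dist x₁ p)]
  have := tendsto_nhds_unique (ht₁.congr' hev) ht₀
  rw [hg0, hg1] at this
  exact one_ne_zero this

/-! ### Perturbations of the identity in a fixed direction -/

/-- The map `x ↦ x + t φ(x) v`, displacing points along the fixed direction `v`. -/
def shift (φ : V → ℝ) (v : V) (t : ℝ) (x : V) : V := x + (t * φ x) • v

lemma lipschitzWith_smul_shift {φ : V → ℝ} {L : ℝ≥0} (hφ : LipschitzWith L φ) (v : V) (t : ℝ) :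
    LipschitzWith (‖t‖₊ * (L * ‖v‖₊)) (fun x => (t * φ x) • v) := by
  refine LipschitzWith.of_dist_le_mul fun x y => ?_
  rw [dist_eq_norm, ← sub_smul, ← mul_sub, norm_smul, norm_mul]
  have := hφ.dist_le_mul x y
  rw [Real.dist_eq, ← Real.norm_eq_abs] at this
  push_cast
  calc ‖t‖ * ‖φ x - φ y‖ * ‖v‖ ≤ ‖t‖ * (L * dist x y) * ‖v‖ := by gcongr
    _ = _ := by ring

lemma lipschitzWith_shift {φ : V → ℝ} {L : ℝ≥0} (hφ : LipschitzWith L φ) (v : V) (t : ℝ) :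
    LipschitzWith (1 + ‖t‖₊ * (L * ‖v‖₊)) (shift φ v t) :=
  LipschitzWith.id.add (lipschitzWith_smul_shift hφ v t)

lemma antilipschitzWith_shift {φ : V → ℝ} {L : ℝ≥0} (hφ : LipschitzWith L φ) {v : V} {t : ℝ}
    (ht : |t| * (L * ‖v‖) ≤ 1 / 2) : AntilipschitzWith 2 (shift φ v t) := by
  refine AntilipschitzWith.of_le_mul_dist fun x y => ?_
  have h1 := (lipschitzWith_smul_shift hφ v t).dist_le_mul x y
  push_cast at h1
  rw [Real.norm_eq_abs] at h1
  have h2 : |t| * (L * ‖v‖) * dist x y ≤ 1 / 2 * dist x y := by gcongr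
  have h3 : dist x y ≤ dist (shift φ v t x) (shift φ v t y)
      + dist ((t * φ x) • v) ((t * φ y) • v) := by
    simp only [dist_eq_norm, shift]
    calc ‖x - y‖ = ‖(x + (t * φ x) • v - (y + (t * φ y) • v))
          - ((t * φ x) • v - (t * φ y) • v)‖ := by congr 1; abel
      _ ≤ _ := norm_sub_le _ _
  push_cast
  linarith

/-- Surjectivity comes from the contraction argument behind `ApproximatesLinearOn.surjective`. -/
lemma bijective_shift {φ : V → ℝ} {L : ℝ≥0} (hφ : LipschitzWith L φ) {v : V} {t : ℝ}
    (ht : |t| * (L * ‖v‖) ≤ 1 / 2) : Function.Bijective (shift φ v t) := by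
  refine ⟨(antilipschitzWith_shift hφ ht).injective, ?_⟩
  have happ : ApproximatesLinearOn (shift φ v t)
      ((ContinuousLinearEquiv.refl ℝ V : V ≃L[ℝ] V) : V →L[ℝ] V) Set.univ
      (‖t‖₊ * (L * ‖v‖₊)) := by
    intro x _ y _
    have h1 := (lipschitzWith_smul_shift hφ v t).dist_le_mul x y
    rw [dist_eq_norm, dist_eq_norm] at h1
    have h2 : shift φ v t x - shift φ v t y - (x - y) = (t * φ x) • v - (t * φ y) • v := by
      simp only [shift]; abel
    rw [← h2] at h1
    exact h1
  have hcs : CompleteSpace V := FiniteDimensional.complete ℝ V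
  refine happ.surjective ?_
  rcases subsingleton_or_nontrivial V with hV | hV
  · exact Or.inl hV
  · right
    have : ‖((ContinuousLinearEquiv.refl ℝ V).symm : V →L[ℝ] V)‖₊ = 1 := by
      rw [← NNReal.coe_inj, coe_nnnorm]
      exact ContinuousLinearMap.norm_id
    rw [this, inv_one, ← NNReal.coe_lt_coe]
    push_cast
    rw [Real.norm_eq_abs]
    linarith

lemma abs_mul_fderiv_le {φ : V → ℝ} {L : ℝ≥0} (hφ : LipschitzWith L φ) {v : V} {t : ℝ}
    (ht : |t| * (L * ‖v‖) ≤ 1 / 2) (x : V) : |t * fderiv ℝ φ x v| ≤ 1 / 2 := by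
  have h1 : ‖fderiv ℝ φ x v‖ ≤ L * ‖v‖ :=
    (fderiv ℝ φ x).le_of_opNorm_le (norm_fderiv_le_of_lipschitz ℝ hφ) v
  rw [abs_mul]
  rw [Real.norm_eq_abs] at h1
  refine le_trans ?_ ht
  gcongr

/-- The Jacobian of `x ↦ x + t φ(x) v` is exactly `1 + t ∂ᵥφ`, by the determinant of a
transvection. -/
lemma measure_shift_image {φ : V → ℝ} (hφs : ContDiff ℝ 1 φ) {L : ℝ≥0} (hφ : LipschitzWith L φ)
    {v : V} {t : ℝ} (ht : |t| * (L * ‖v‖) ≤ 1 / 2) {S : Set V} (hS : MeasurableSet S) :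
    μ (shift φ v t '' S) = ∫⁻ x in S, ENNReal.ofReal (1 + t * fderiv ℝ φ x v) ∂μ := by
  let D : V → V →L[ℝ] V := fun x =>
    ContinuousLinearMap.id ℝ V + (t • fderiv ℝ φ x).smulRight v
  have hD : ∀ x, HasFDerivAt (shift φ v t) (D x) x := by
    intro x
    have h1 : HasFDerivAt φ (fderiv ℝ φ x) x := (hφs.differentiable one_ne_zero x).hasFDerivAt
    exact (hasFDerivAt_id x).add ((h1.const_mul t).smul_const v)
  have hdet : ∀ x, (D x).det = 1 + t * fderiv ℝ φ x v := by
    intro x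
    have : ((D x : V →L[ℝ] V) : V →ₗ[ℝ] V) =
        LinearMap.transvection ((t • fderiv ℝ φ x : V →L[ℝ] ℝ) : V →ₗ[ℝ] ℝ) v := by
      ext y
      simp [D, LinearMap.transvection]
    rw [ContinuousLinearMap.det, this, LinearMap.transvection.det]
    simp
  rw [← lintegral_abs_det_fderiv_eq_addHaar_image μ hS (fun x _ => (hD x).hasFDerivWithinAt)
    (bijective_shift hφ ht).1.injOn]
  congr 1
  ext x
  rw [hdet, abs_of_nonneg]
  have := (abs_le.1 (abs_mul_fderiv_le hφ ht x)).1
  linarith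

lemma measure_shift_image_le {φ : V → ℝ} (hφs : ContDiff ℝ 1 φ) {L : ℝ≥0}
    (hφ : LipschitzWith L φ) {v : V} {t : ℝ} (ht : |t| * (L * ‖v‖) ≤ 1 / 2) {S : Set V}
    (hS : MeasurableSet S) : μ (shift φ v t '' S) ≤ 2 * μ S := by
  rw [measure_shift_image hφs hφ ht hS, ← setLIntegral_const]
  refine lintegral_mono fun x => ?_
  have := (abs_le.1 (abs_mul_fderiv_le hφ ht x)).2
  calc ENNReal.ofReal (1 + t * fderiv ℝ φ x v) ≤ ENNReal.ofReal 2 :=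
        ENNReal.ofReal_le_ofReal (by linarith)
    _ = 2 := by simp

lemma toReal_measure_shift_image {φ : V → ℝ} (hφs : ContDiff ℝ 1 φ) (hφc : HasCompactSupport φ)
    {L : ℝ≥0} (hφ : LipschitzWith L φ) {v : V} {t : ℝ} (ht : |t| * (L * ‖v‖) ≤ 1 / 2) {S : Set V}
    (hS : MeasurableSet S) (hfin : μ S ≠ ⊤) :
    (μ (shift φ v t '' S)).toReal = (μ S).toReal + t * ∫ x in S, fderiv ℝ φ x v ∂μ := by
  have hint : Integrable (fun x => fderiv ℝ φ x v) (μ.restrict S) := by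
    have hc : Continuous (fun x => fderiv ℝ φ x v) :=
      (hφs.continuous_fderiv one_ne_zero).clm_apply continuous_const
    exact (hc.integrable_of_hasCompactSupport (hφc.fderiv_apply ℝ v)).restrict
  have h1 : Integrable (fun _ : V => (1 : ℝ)) (μ.restrict S) := by
    rw [integrable_const_iff]
    right
    exact ⟨by rwa [Measure.restrict_apply_univ, lt_top_iff_ne_top]⟩
  have hnonneg : ∀ x, 0 ≤ 1 + t * fderiv ℝ φ x v := fun x => by
    linarith [(abs_le.1 (abs_mul_fderiv_le hφ ht x)).1]
  have h2 : Integrable (fun x => 1 + t * fderiv ℝ φ x v) (μ.restrict S) :=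
    h1.add (hint.const_mul t)
  rw [measure_shift_image hφs hφ ht hS, ← ofReal_integral_eq_lintegral_ofReal h2
    (Eventually.of_forall hnonneg), ENNReal.toReal_ofReal (integral_nonneg hnonneg),
    integral_add h1 (hint.const_mul t), integral_const_mul]
  simp [Measure.real]

lemma shift_eq_self {φ : V → ℝ} {x : V} (hx : x ∉ tsupport φ) (v : V) (t : ℝ) :
    shift φ v t x = x := by
  simp [shift, image_eq_zero_of_notMem_tsupport hx]

/-- Any set containing the support of `φ` is invariant under `shift φ v t`. -/
lemma shift_mem_iff {φ : V → ℝ} {L : ℝ≥0} (hφ : LipschitzWith L φ) {v : V} {t : ℝ}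
    (ht : |t| * (L * ‖v‖) ≤ 1 / 2) {U : Set V} (hU : tsupport φ ⊆ U) (x : V) :
    shift φ v t x ∈ U ↔ x ∈ U := by
  by_cases hx : x ∈ tsupport φ
  · refine iff_of_true (hU ?_) (hU hx)
    -- a point mapped outside the support is fixed, by injectivity
    by_contra h
    have := (bijective_shift hφ ht).1 (shift_eq_self h v t)
    exact h (by rwa [this])
  · rw [shift_eq_self hx]

/-! ### Perimeter growth -/

lemma one_add_pow_le (m : ℕ) {s : ℝ} (h0 : 0 ≤ s) (h1 : s ≤ 1) :
    (1 + s) ^ m ≤ 1 + 3 ^ m * s := by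
  induction m with
  | zero => simpa using h0
  | succ m ih =>
    have h3 : (1 : ℝ) ≤ 3 ^ m := one_le_pow₀ (by norm_num)
    calc (1 + s) ^ (m + 1) = (1 + s) ^ m * (1 + s) := pow_succ _ _
      _ ≤ (1 + 3 ^ m * s) * (1 + s) := by gcongr
      _ ≤ 1 + 3 ^ (m + 1) * s := by
        rw [pow_succ]
        nlinarith [mul_nonneg (by positivity : (0 : ℝ) ≤ 3 ^ m) (mul_nonneg h0 (sub_nonneg.2 h1)),
          mul_nonneg (sub_nonneg.2 h3) h0]

end

/-- Volume-fixing variations: a set of finite measure and finite perimeter with positive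
relative perimeter in a ball `B_R(p₀)` can be modified inside the ball to adjust its volume
by any small amount `ε`, increasing its relative perimeter by at most `C|ε|`. -/
theorem volume_fixing_variation (n : ℕ) (hn : 2 ≤ n)
    (E : Set (EuclideanSpace ℝ (Fin n))) (hE : MeasurableSet E)
    (hvol : volume E ≠ ⊤)
    (hper : μH[(n : ℝ) - 1] (essBoundary volume E) ≠ ⊤)
    (p₀ : EuclideanSpace ℝ (Fin n)) (R : ℝ) (hR : 0 < R)
    (hrel : 0 < μH[(n : ℝ) - 1] (essBoundary volume E ∩ ball p₀ R)) :
    ∃ ε₀ : ℝ, 0 < ε₀ ∧ ∃ C : ℝ, 0 < C ∧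
      ∀ ε : ℝ, |ε| < ε₀ →
        ∃ F : Set (EuclideanSpace ℝ (Fin n)), MeasurableSet F ∧ volume F ≠ ⊤ ∧
          (∃ K : Set (EuclideanSpace ℝ (Fin n)),
            IsCompact K ∧ K ⊆ ball p₀ R ∧ F \ K = E \ K) ∧
          (volume F).toReal = (volume E).toReal + ε ∧
          μH[(n : ℝ) - 1] (essBoundary volume F ∩ ball p₀ R) ≤
            μH[(n : ℝ) - 1] (essBoundary volume E ∩ ball p₀ R) + ENNReal.ofReal (C * |ε|) := by
  have hd : (n : ℝ) - 1 = ((n - 1 : ℕ) : ℝ) := by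
    rw [Nat.cast_sub (by omega), Nat.cast_one]
  set P := μH[(n : ℝ) - 1] (essBoundary volume E ∩ ball p₀ R) with hP
  have hPtop : P ≠ ⊤ := measure_ne_top_of_subset Set.inter_subset_left hper
  -- a test field along which the volume of `E` varies to first order
  obtain ⟨φ, hφs, hφc, hφt, v, hD⟩ : ∃ φ : EuclideanSpace ℝ (Fin n) → ℝ, ContDiff ℝ 1 φ ∧
      HasCompactSupport φ ∧ tsupport φ ⊆ ball p₀ R ∧
      ∃ v, ∫ x in E, fderiv ℝ φ x v ≠ 0 := by
    by_contra! hcon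
    refine hrel.ne' ?_
    suffices hemp : essBoundary volume E ∩ ball p₀ R = ∅ by rw [hP, hemp, measure_empty]
    refine Set.eq_empty_of_forall_notMem fun x hx => hx.1 ?_
    rcases null_or_null_of_forall_integral_eq_zero hE p₀ R hcon with h | h
    · exact Or.inl (mem_densitySet_zero_of_null isOpen_ball h hx.2)
    · exact Or.inr ((mem_densitySet_compl_iff hE x).2
        (mem_densitySet_zero_of_null isOpen_ball h hx.2))
  set D := ∫ x in E, fderiv ℝ φ x v
  obtain ⟨L, hL⟩ := hφs.lipschitzWith_of_hasCompactSupport hφc one_ne_zero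
  have hM : 0 ≤ L * ‖v‖ := by positivity
  have hDpos : 0 < |D| := abs_pos.2 hD
  -- the `+ 1` terms only guard against vanishing constants
  refine ⟨|D| / (2 * (L * ‖v‖ + 1)), by positivity,
    3 ^ (n - 1) * (L * ‖v‖) / |D| * P.toReal + 1, by positivity, fun ε hε => ?_⟩
  -- the volume is affine in `t` with slope `D`
  set t := ε / D with ht_def
  have ht : |t| * (L * ‖v‖) ≤ 1 / 2 := by
    rw [lt_div_iff₀ (by positivity)] at hε
    rw [ht_def, abs_div, div_mul_eq_mul_div, div_le_iff₀ hDpos]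
    nlinarith [abs_nonneg ε]
  have hbij := bijective_shift hL ht
  have hanti := antilipschitzWith_shift hL ht
  have hlip := lipschitzWith_shift hL v t
  have hF : MeasurableSet (shift φ v t '' E) :=
    hE.image_of_continuousOn_injOn hlip.continuous.continuousOn hbij.1.injOn
  refine ⟨shift φ v t '' E, hF, ?_, ⟨tsupport φ, hφc, hφt, ?_⟩, ?_, ?_⟩
  · exact ne_top_of_le_ne_top (ENNReal.mul_ne_top ENNReal.ofNat_ne_top hvol)
      (measure_shift_image_le hφs hL ht hE)
  · ext y
    constructor
    · rintro ⟨⟨x, hx, rfl⟩, hy⟩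
      rw [shift_mem_iff hL ht subset_rfl] at hy
      rw [shift_eq_self hy]
      exact ⟨hx, hy⟩
    · rintro ⟨hy, hyK⟩
      exact ⟨⟨y, hy, shift_eq_self hyK v t⟩, hyK⟩
  · rw [toReal_measure_shift_image hφs hφc hL ht hE hvol]
    change _ + t * D = _
    rw [ht_def, div_mul_cancel₀ _ hD]
  · have hsub : essBoundary volume (shift φ v t '' E) ∩ ball p₀ R ⊆
        shift φ v t '' (essBoundary volume E ∩ ball p₀ R) := by
      rintro y ⟨hy, hyB⟩
      obtain ⟨x, hx, rfl⟩ := essBoundary_image_subset hbij hanti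
        (fun S hS => measure_shift_image_le hφs hL ht hS) hE hF hy
      exact ⟨x, ⟨hx, (shift_mem_iff hL ht hφt x).1 hyB⟩, rfl⟩
    have hgrow := one_add_pow_le (n - 1) (s := |t| * (L * ‖v‖)) (by positivity) (by linarith)
    have hK : ((1 + ‖t‖₊ * (L * ‖v‖₊) : NNReal) : ℝ≥0∞) =
        ENNReal.ofReal (1 + |t| * (L * ‖v‖)) := by
      rw [← ENNReal.ofReal_coe_nnreal]
      push_cast
      rw [Real.norm_eq_abs]
    calc μH[(n : ℝ) - 1] (essBoundary volume (shift φ v t '' E) ∩ ball p₀ R)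
        ≤ ((1 + ‖t‖₊ * (L * ‖v‖₊) : NNReal) : ℝ≥0∞) ^ ((n : ℝ) - 1) * P :=
          (measure_mono hsub).trans
            (hlip.hausdorffMeasure_image_le (by rw [hd]; positivity) _)
      _ = ENNReal.ofReal ((1 + |t| * (L * ‖v‖)) ^ (n - 1) * P.toReal) := by
          rw [hK, hd, ENNReal.rpow_natCast, ← ENNReal.ofReal_pow (by positivity),
            ENNReal.ofReal_mul (by positivity), ENNReal.ofReal_toReal hPtop]
      _ ≤ ENNReal.ofReal (P.toReal + (3 ^ (n - 1) * (L * ‖v‖) / |D| * P.toReal + 1) * |ε|) := by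
          refine ENNReal.ofReal_le_ofReal ?_
          calc (1 + |t| * (L * ‖v‖)) ^ (n - 1) * P.toReal
              ≤ (1 + 3 ^ (n - 1) * (|t| * (L * ‖v‖))) * P.toReal := by gcongr
            _ = P.toReal + 3 ^ (n - 1) * (L * ‖v‖) / |D| * P.toReal * |ε| := by
                rw [ht_def, abs_div]; ring
            _ ≤ _ := by nlinarith [abs_nonneg ε]
      _ = _ := by
          rw [ENNReal.ofReal_add (by positivity) (by positivity), ENNReal.ofReal_toReal hPtop]
end

section
/- Let n ≥ 2. For every V ∈ (0, ∞), the infimum of H^{n−1}(∂*E) over all Borel sets E ⊆ ℝⁿ with |E| = V equals the infimum of H^{n−1}(∂*E) over all bounded Borel sets E ⊆ ℝⁿ with |E| = V. -/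
/-!
Given a Borel set `E` of volume `V` and finite perimeter, a bounded competitor with almost the same
perimeter is produced by truncating `E` with a large cube and then rescaling to restore the volume.

* Truncation by an open cube `Q` creates new essential boundary only inside `E¹ ∩ ∂Q`, where `E¹`
  is the set of points of density `1` (`essBoundary_inter_subset`).
* By the Lebesgue density theorem `E¹` has finite volume, so by Fubini the Hausdorff measures of its
  slices by hyperplanes orthogonal to a coordinate axis are integrable in the height
  (`exists_slice_bound`). Hence there are arbitrarily large cubes with `H^{n-1}(E¹ ∩ ∂Q)`
  arbitrarily small (`exists_good_cube`).
* The truncated sets have volumes tending to `V`, so the homotheties bringing their volumes back to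
  exactly `V` have ratios `c → 1`, and they multiply the perimeter by `c ^ (n - 1)`.

Letting the cubes grow bounds the profile over bounded sets by the perimeter of `E`.
-/


open MeasureTheory Metric Filter Bornology
open scoped ENNReal

/-! ### Density points and the essential boundary -/

/-- Cutting `E` with a set `U` creates new essential boundary only at the points of `frontier U`
where `E` has density `1`. -/
lemma essBoundary_inter_subset {X : Type*} [MetricSpace X] [MeasurableSpace X]
    (μ : Measure X) (E U : Set X) :
    essBoundary μ (E ∩ U) ⊆ essBoundary μ E ∪ (densitySet μ E 1 ∩ frontier U) := by
  intro x hx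
  by_contra hcon
  simp only [Set.mem_union, not_or, essBoundary, Set.mem_compl_iff, not_not, Set.mem_inter_iff,
    not_and] at hx hcon
  obtain ⟨hE, hfr⟩ := hcon
  have h0 : x ∈ densitySet μ E 0 → False := fun h => hx.1 <| by
    refine tendsto_of_tendsto_of_tendsto_of_le_of_le tendsto_const_nhds h (fun _ => zero_le) ?_
    intro r
    exact ENNReal.div_le_div_right (measure_mono (by gcongr; exact Set.inter_subset_left)) _
  have h1 : x ∈ densitySet μ E 1 := hE h0
  have hxf := hfr h1
  by_cases hi : x ∈ interior U
  · apply hx.2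
    obtain ⟨ε, hε, hb⟩ := Metric.mem_nhds_iff.1 (mem_interior_iff_mem_nhds.1 hi)
    refine Tendsto.congr' ?_ h1
    filter_upwards [Ioo_mem_nhdsGT hε] with r hr
    congr 2
    ext y
    simp only [Set.mem_inter_iff]
    exact ⟨fun h => ⟨⟨h.1, hb (ball_subset_ball hr.2.le h.2)⟩, h.2⟩, fun h => ⟨h.1.1, h.2⟩⟩
  · have hc : x ∈ (closure U)ᶜ := fun hc => hxf ⟨hc, hi⟩
    apply hx.1
    obtain ⟨ε, hε, hb⟩ := Metric.mem_nhds_iff.1 (isClosed_closure.isOpen_compl.mem_nhds hc)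
    refine Tendsto.congr' ?_ tendsto_const_nhds
    filter_upwards [Ioo_mem_nhdsGT hε] with r hr
    have : E ∩ U ∩ ball x r = ∅ := by
      ext y
      simp only [Set.mem_inter_iff, Set.mem_empty_iff_false, iff_false]
      exact fun h => hb (ball_subset_ball hr.2.le h.2) (subset_closure h.1.2)
    simp [this]

open scoped Pointwise in
/-- Homotheties map points of density `t` to points of density `t`. -/
lemma smul_mem_densitySet {n : ℕ} {E : Set (EuclideanSpace ℝ (Fin n))} {t : ℝ≥0∞} {c : ℝ}
    (hc : 0 < c) {x : EuclideanSpace ℝ (Fin n)} (hx : x ∈ densitySet volume E t) :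
    c • x ∈ densitySet volume (c • E) t := by
  have hlim : Tendsto (fun r : ℝ => c⁻¹ * r) (nhdsWithin 0 (Set.Ioi 0))
      (nhdsWithin 0 (Set.Ioi 0)) := by
    refine tendsto_nhdsWithin_iff.2 ⟨?_, ?_⟩
    · have : Tendsto (fun r : ℝ => c⁻¹ * r) (nhds 0) (nhds (c⁻¹ * 0)) :=
        (continuous_const_mul c⁻¹).tendsto 0
      rw [mul_zero] at this
      exact this.mono_left nhdsWithin_le_nhds
    · filter_upwards [self_mem_nhdsWithin] with r hr
      exact mul_pos (inv_pos.2 hc) hr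
  refine (Tendsto.comp hx hlim).congr fun r => ?_
  have hball : ball (c • x) r = c • ball x (c⁻¹ * r) := by
    rw [_root_.smul_ball hc.ne', Real.norm_of_nonneg hc.le, mul_inv_cancel_left₀ hc.ne']
  simp only [Function.comp_apply]
  rw [hball, ← Set.smul_set_inter₀ hc.ne', Measure.addHaar_smul, Measure.addHaar_smul,
    ENNReal.mul_div_mul_left]
  · simp [hc.ne']
  · exact ENNReal.ofReal_ne_top

open scoped Pointwise in
lemma essBoundary_smul_subset {n : ℕ} (E : Set (EuclideanSpace ℝ (Fin n))) {c : ℝ}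
    (hc : 0 < c) : essBoundary volume (c • E) ⊆ c • essBoundary volume E := by
  intro x hx
  rw [Set.mem_smul_set_iff_inv_smul_mem₀ hc.ne']
  rintro (h | h)
  · exact hx (Or.inl (by simpa [smul_smul, hc.ne'] using smul_mem_densitySet hc h))
  · exact hx (Or.inr (by simpa [smul_smul, hc.ne'] using smul_mem_densitySet hc h))

/-- One half of the Lebesgue density theorem, for open balls. -/
lemma volume_densitySet_one_le {m : ℕ} {E : Set (EuclideanSpace ℝ (Fin (m + 1)))}
    (hE : MeasurableSet E) : volume (densitySet volume E 1) ≤ volume E := by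
  refine measure_mono_ae ?_
  filter_upwards [Besicovitch.ae_tendsto_measure_inter_div_of_measurableSet volume hE] with x hx h1
  by_contra hxE
  change x ∉ E at hxE
  rw [Set.indicator_of_notMem hxE] at hx
  refine zero_ne_one (tendsto_nhds_unique (hx.congr fun r => ?_) h1)
  -- spheres are Lebesgue null, so open and closed balls give the same density ratios
  have hae : (ball x r : Set _) =ᵐ[volume] closedBall x r := by
    refine ball_subset_closedBall.eventuallyLE.antisymm ?_
    refine ae_le_set.2 ?_
    rw [closedBall_sdiff_ball]
    exact Measure.addHaar_sphere volume x r
  rw [measure_congr hae, measure_congr ((ae_eq_refl E).inter hae)]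

/-! ### Slicing by hyperplanes -/

/-- An Eilenberg-type slicing inequality: the Hausdorff measures of the slices of a set of finite
volume by parallel hyperplanes are dominated by an integrable function of the height. -/
lemma exists_slice_bound {m : ℕ} {A : Set (EuclideanSpace ℝ (Fin (m + 1)))}
    (hA : volume A ≠ ⊤) (i : Fin (m + 1)) :
    ∃ g : ℝ → ℝ≥0∞, Measurable g ∧ ∫⁻ t, g t ≠ ⊤ ∧
      ∀ t, μH[(m : ℝ)] (A ∩ {x | x i = t}) ≤ g t := by
  set B := toMeasurable volume A with hB
  have hBm : MeasurableSet B := measurableSet_toMeasurable _ _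
  let φ : ℝ × (Fin m → ℝ) → EuclideanSpace ℝ (Fin (m + 1)) :=
    fun p => WithLp.toLp 2 (i.insertNth p.1 p.2)
  have hφ : MeasurePreserving φ volume volume :=
    (PiLp.volume_preserving_toLp (Fin (m + 1))).comp
      (volume_preserving_piFinSuccAbove (fun _ : Fin (m + 1) => ℝ) i).symm
  have hLip : ∃ K : NNReal, ∀ t, LipschitzWith K (fun y : Fin m → ℝ => φ (t, y)) := by
    refine ⟨_ * 1, fun t => (PiLp.lipschitzWith_toLp 2 (fun _ : Fin (m + 1) => ℝ)).comp
      (g := fun y : Fin m → ℝ => (i.insertNth t y : Fin (m + 1) → ℝ)) ?_⟩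
    refine LipschitzWith.of_dist_le_mul fun y z => ?_
    rw [NNReal.coe_one, one_mul, dist_pi_le_iff dist_nonneg]
    refine i.forall_iff_succAbove.2 ⟨?_, fun j => ?_⟩
    · simp
    · simpa using dist_le_pi_dist y z j
  obtain ⟨K, hK⟩ := hLip
  have hC : (K : ℝ≥0∞) ^ (m : ℝ) ≠ ⊤ := by simp
  have hS : MeasurableSet (φ ⁻¹' B) := hφ.measurable hBm
  refine ⟨fun t => (K : ℝ≥0∞) ^ (m : ℝ) * volume (Prod.mk t ⁻¹' (φ ⁻¹' B)), ?_, ?_, fun t => ?_⟩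
  · exact (measurable_measure_prodMk_left hS).const_mul _
  · rw [lintegral_const_mul _ (measurable_measure_prodMk_left hS), ← Measure.prod_apply hS,
      ← Measure.volume_eq_prod, hφ.measure_preimage hBm.nullMeasurableSet, hB, measure_toMeasurable]
    exact ENNReal.mul_ne_top hC hA
  · have hsub : A ∩ {x | x i = t} ⊆ (fun y => φ (t, y)) '' (Prod.mk t ⁻¹' (φ ⁻¹' B)) := by
      rintro x ⟨hxA, hxt⟩
      have hx : φ (t, fun j => x (i.succAbove j)) = x := by
        ext k
        revert k
        refine i.forall_iff_succAbove.2 ⟨?_, fun j => ?_⟩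
        · simpa [φ] using (hxt : x i = t).symm
        · simp [φ]
      refine ⟨fun j => x (i.succAbove j), ?_, hx⟩
      simp only [Set.mem_preimage]
      rw [hx]
      exact subset_toMeasurable _ _ hxA
    have hpi : (μH[(m : ℝ)] : Measure (Fin m → ℝ)) = volume := by
      simpa using hausdorffMeasure_pi_real (ι := Fin m)
    refine (measure_mono hsub).trans ?_
    rw [← hpi]
    exact (hK t).hausdorffMeasure_image_le m.cast_nonneg _

/-! ### Cubes with small slices -/

/-- The open cube `(-R, R)ⁿ`. -/
def openCube (n : ℕ) (R : ℝ) : Set (EuclideanSpace ℝ (Fin n)) := {x | ∀ i, |x i| < R}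

lemma isOpen_openCube (n : ℕ) (R : ℝ) : IsOpen (openCube n R) := by
  have : openCube n R = ⋂ i, {x | |x i| < R} := by ext; simp [openCube]
  rw [this]
  exact isOpen_iInter_of_finite fun i => isOpen_lt (by fun_prop) continuous_const

lemma isBounded_openCube (n : ℕ) (R : ℝ) : IsBounded (openCube n R) := by
  refine (isBounded_iff_forall_norm_le).2 ⟨√(∑ _i : Fin n, R ^ 2), fun x hx => ?_⟩
  rw [EuclideanSpace.norm_eq]
  refine Real.sqrt_le_sqrt (Finset.sum_le_sum fun i _ => ?_)
  rw [Real.norm_eq_abs]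
  exact pow_le_pow_left₀ (abs_nonneg _) (hx i).le 2

lemma frontier_openCube_subset (n : ℕ) (R : ℝ) :
    frontier (openCube n R) ⊆ ⋃ i, ({x | x i = R} ∪ {x | x i = -R}) := by
  intro x hx
  rw [(isOpen_openCube n R).frontier_eq] at hx
  have hcl : closure (openCube n R) ⊆ {x | ∀ i, |x i| ≤ R} := by
    refine closure_minimal (fun x hx i => (hx i).le) ?_
    have : {x : EuclideanSpace ℝ (Fin n) | ∀ i, |x i| ≤ R} = ⋂ i, {x | |x i| ≤ R} := by
      ext; simp
    rw [this]
    exact isClosed_iInter fun i => isClosed_le (by fun_prop) continuous_const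
  have h1 := hcl hx.1
  have h2 := hx.2
  simp only [openCube, Set.mem_ofPred_eq, not_forall, not_lt] at h1 h2
  obtain ⟨i, hi⟩ := h2
  refine Set.mem_iUnion.2 ⟨i, ?_⟩
  exact eq_or_eq_neg_of_abs_eq ((h1 i).antisymm hi)

/-- A set of finite volume meets the boundaries of arbitrarily large cubes in arbitrarily small
Hausdorff measure. -/
lemma exists_good_cube {m : ℕ} {A : Set (EuclideanSpace ℝ (Fin (m + 1)))}
    (hA : volume A ≠ ⊤) (R₀ : ℝ) {ε : ℝ≥0∞} (hε : ε ≠ 0) :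
    ∃ R, R₀ ≤ R ∧ μH[(m : ℝ)] (A ∩ frontier (openCube (m + 1) R)) ≤ ε := by
  choose g hgm hgi hg using exists_slice_bound hA
  by_contra! hcon
  have hle : ∀ R, μH[(m : ℝ)] (A ∩ frontier (openCube (m + 1) R)) ≤ ∑ i, (g i R + g i (-R)) := by
    intro R
    calc μH[(m : ℝ)] (A ∩ frontier (openCube (m + 1) R))
        ≤ μH[(m : ℝ)] (⋃ i, ((A ∩ {x | x i = R}) ∪ (A ∩ {x | x i = -R}))) := by
          refine measure_mono fun x hx => ?_
          obtain ⟨i, hi⟩ := Set.mem_iUnion.1 (frontier_openCube_subset _ _ hx.2)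
          exact Set.mem_iUnion.2 ⟨i, hi.imp (fun h => ⟨hx.1, h⟩) (fun h => ⟨hx.1, h⟩)⟩
      _ ≤ ∑ i, μH[(m : ℝ)] ((A ∩ {x | x i = R}) ∪ (A ∩ {x | x i = -R})) :=
          measure_iUnion_fintype_le _ _
      _ ≤ ∑ i, (g i R + g i (-R)) := by
          refine Finset.sum_le_sum fun i _ => (measure_union_le _ _).trans ?_
          exact add_le_add (hg i R) (hg i (-R))
  have hfin : ∫⁻ R, ∑ i, (g i R + g i (-R)) ≠ ⊤ := by
    rw [lintegral_finsetSum (f := fun i R => g i R + g i (-R)) _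
      fun i _ => (hgm i).add ((hgm i).comp measurable_neg)]
    refine ENNReal.sum_ne_top.2 fun i _ => ?_
    rw [lintegral_add_left (hgm i), lintegral_neg_eq_self (g i)]
    exact ENNReal.add_ne_top.2 ⟨hgi i, hgi i⟩
  apply hfin
  rw [eq_top_iff]
  calc (⊤ : ℝ≥0∞) = ∫⁻ _ in Set.Ici R₀, ε := by
        rw [setLIntegral_const, Real.volume_Ici, ENNReal.mul_top hε]
    _ ≤ ∫⁻ R in Set.Ici R₀, ∑ i, (g i R + g i (-R)) :=
        setLIntegral_mono' measurableSet_Ici fun R hR => (hcon R hR).le.trans (hle R)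
    _ ≤ _ := setLIntegral_le_lintegral _ _

/-! ### Truncation and rescaling -/

open scoped Pointwise in
/-- The key inequality: the profile computed with bounded sets is at most the perimeter of any
measurable set of the same volume. -/
lemma bounded_profile_le {m : ℕ} {V : ℝ} (hV : 0 < V)
    {E : Set (EuclideanSpace ℝ (Fin (m + 1)))} (hE : MeasurableSet E)
    (hEV : volume E = ENNReal.ofReal V) :
    (⨅ (F : Set (EuclideanSpace ℝ (Fin (m + 1)))) (_ : MeasurableSet F)
        (_ : IsBounded F) (_ : volume F = ENNReal.ofReal V),
        μH[(m : ℝ)] (essBoundary volume F)) ≤ μH[(m : ℝ)] (essBoundary volume E) := by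
  rcases eq_or_ne (μH[(m : ℝ)] (essBoundary volume E)) ⊤ with hP | hP
  · rw [hP]; exact le_top
  have hEfin : volume E ≠ ⊤ := by rw [hEV]; exact ENNReal.ofReal_ne_top
  have hA : volume (densitySet volume E 1) ≠ ⊤ :=
    ne_top_of_le_ne_top hEfin (volume_densitySet_one_le hE)
  have hex : ∀ k : ℕ, ∃ R, (k : ℝ) ≤ R ∧
      μH[(m : ℝ)] (densitySet volume E 1 ∩ frontier (openCube (m + 1) R)) ≤ (k : ℝ≥0∞)⁻¹ :=
    fun k => exists_good_cube hA k (by simp)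
  choose R hkR hR using hex
  set F : ℕ → Set (EuclideanSpace ℝ (Fin (m + 1))) := fun k => E ∩ openCube (m + 1) (R k) with hF
  have hFm : ∀ k, MeasurableSet (F k) := fun k => hE.inter (isOpen_openCube _ _).measurableSet
  have hFfin : ∀ k, volume (F k) ≠ ⊤ := fun k =>
    ne_top_of_le_ne_top hEfin (measure_mono Set.inter_subset_left)
  -- the volumes of the truncations converge to `V`
  have hvol : Tendsto (fun k => volume (F k)) atTop (nhds (volume E)) := by
    have hmono : Monotone fun k : ℕ => E ∩ openCube (m + 1) (k : ℝ) := fun a b hab =>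
      Set.inter_subset_inter_right _ fun x hx i => (hx i).trans_le (Nat.cast_le.2 hab)
    have hU : ⋃ k : ℕ, E ∩ openCube (m + 1) (k : ℝ) = E := by
      rw [← Set.inter_iUnion, Set.inter_eq_left]
      intro x _
      obtain ⟨k, hk⟩ := exists_nat_gt ‖x‖
      exact Set.mem_iUnion.2 ⟨k, fun i =>
        (by simpa using PiLp.norm_apply_le x i : |x i| ≤ ‖x‖).trans_lt hk⟩
    have h := tendsto_measure_iUnion_atTop (μ := volume) hmono
    rw [hU] at h
    refine tendsto_of_tendsto_of_tendsto_of_le_of_le h tendsto_const_nhds (fun k => ?_)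
      fun k => measure_mono Set.inter_subset_left
    exact measure_mono (Set.inter_subset_inter_right _ fun x hx i => (hx i).trans_le (hkR k))
  have hvolR : Tendsto (fun k => (volume (F k)).toReal) atTop (nhds V) := by
    have := (ENNReal.tendsto_toReal hEfin).comp hvol
    rwa [hEV, ENNReal.toReal_ofReal hV.le] at this
  set c : ℕ → ℝ := fun k => (V / (volume (F k)).toReal) ^ ((m + 1 : ℝ)⁻¹) with hc
  have hclim : Tendsto c atTop (nhds 1) := by
    have h1 : Tendsto (fun k => V / (volume (F k)).toReal) atTop (nhds 1) := by
      have := Tendsto.div (tendsto_const_nhds (x := V)) hvolR hV.ne'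
      rwa [div_self hV.ne'] at this
    have := h1.rpow_const (p := (m + 1 : ℝ)⁻¹) (Or.inl one_ne_zero)
    rwa [Real.one_rpow] at this
  have hbound : ∀ᶠ k in atTop,
      (⨅ (F : Set (EuclideanSpace ℝ (Fin (m + 1)))) (_ : MeasurableSet F)
        (_ : IsBounded F) (_ : volume F = ENNReal.ofReal V),
        μH[(m : ℝ)] (essBoundary volume F)) ≤
      ENNReal.ofReal (c k ^ m) * (μH[(m : ℝ)] (essBoundary volume E) + (k : ℝ≥0∞)⁻¹) := by
    filter_upwards [Tendsto.eventually_const_lt hV hvolR] with k hk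
    have hq : 0 < V / (volume (F k)).toReal := div_pos hV hk
    have hck : 0 < c k := Real.rpow_pos_of_pos hq _
    have hcpow : c k ^ (m + 1) = V / (volume (F k)).toReal := by
      have := Real.rpow_inv_natCast_pow hq.le (Nat.succ_ne_zero m)
      simpa [hc] using this
    have hv : volume (c k • F k) = ENNReal.ofReal V := by
      rw [Measure.addHaar_smul, finrank_euclideanSpace, Fintype.card_fin, hcpow, abs_of_pos hq,
        ENNReal.ofReal_div_of_pos hk, ENNReal.ofReal_toReal (hFfin k)]
      exact ENNReal.div_mul_cancel (ENNReal.toReal_pos_iff.1 hk).1.ne' (hFfin k)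
    refine (iInf₂_le_of_le (c k • F k) ((hFm k).const_smul_of_ne_zero hck.ne')
      (iInf₂_le_of_le (((isBounded_openCube _ _).subset Set.inter_subset_right).smul₀ (c k)) hv
        le_rfl)).trans ?_
    calc μH[(m : ℝ)] (essBoundary volume (c k • F k))
        ≤ μH[(m : ℝ)] (c k • essBoundary volume (F k)) :=
          measure_mono (essBoundary_smul_subset _ hck)
      _ = ENNReal.ofReal (c k ^ m) * μH[(m : ℝ)] (essBoundary volume (F k)) := by
          rw [Measure.hausdorffMeasure_smul₀ m.cast_nonneg hck.ne', ENNReal.smul_def, smul_eq_mul,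
            NNReal.rpow_natCast, Real.nnnorm_of_nonneg hck.le]
          congr 1
          rw [ENNReal.ofReal_pow hck.le, ENNReal.coe_pow, ENNReal.ofReal_eq_coe_nnreal hck.le]
      _ ≤ _ := by
          gcongr
          refine (measure_mono (essBoundary_inter_subset _ _ _)).trans ?_
          exact (measure_union_le _ _).trans (by gcongr; exact hR k)
  refine ge_of_tendsto ?_ hbound
  have h1 : Tendsto (fun k => ENNReal.ofReal (c k ^ m)) atTop (nhds 1) := by
    have := ENNReal.tendsto_ofReal (hclim.pow m)
    simpa using this
  have h2 : Tendsto (fun k : ℕ => μH[(m : ℝ)] (essBoundary volume E) + (k : ℝ≥0∞)⁻¹) atTop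
      (nhds (μH[(m : ℝ)] (essBoundary volume E))) := by
    simpa using tendsto_const_nhds.add ENNReal.tendsto_inv_nat_nhds_zero
  simpa using ENNReal.Tendsto.mul h1 (Or.inl one_ne_zero) h2 (Or.inr ENNReal.one_ne_top)

/-- The Euclidean isoperimetric profile can be computed using bounded sets only. -/
theorem isoperimetric_profile_bounded_sets (n : ℕ) (hn : 2 ≤ n) (V : ℝ) (hV : 0 < V) :
    (⨅ (E : Set (EuclideanSpace ℝ (Fin n))) (_ : MeasurableSet E)
        (_ : volume E = ENNReal.ofReal V),
        μH[(n : ℝ) - 1] (essBoundary volume E)) =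
    (⨅ (E : Set (EuclideanSpace ℝ (Fin n))) (_ : MeasurableSet E)
        (_ : IsBounded E) (_ : volume E = ENNReal.ofReal V),
        μH[(n : ℝ) - 1] (essBoundary volume E)) := by
  apply le_antisymm
  · exact le_iInf₂ fun E hE => le_iInf₂ fun _ hv => iInf₂_le_of_le E hE (iInf_le _ hv)
  · obtain ⟨m, rfl⟩ : ∃ m, n = m + 1 := ⟨n - 1, by omega⟩
    have hm : ((m + 1 : ℕ) : ℝ) - 1 = m := by push_cast; ring
    rw [hm]
    exact le_iInf₂ fun E hE => le_iInf fun hv => bounded_profile_le hV hE hv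
end
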